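/- arXiv:2411.04353 — 4 statements merged into one kernel-verified Lean document; each statement's English description precedes it below -/
import Mathlib

section
/- Let |ψ₀⟩ and |ψ₁⟩ be n-qudit pure states that are cutwise orthogonal with respect to a bipartition (A,B), i.e., ρ₀^{(A)} ρ₁^{(A)} = 0 and ρ₀^{(B)} ρ₁^{(B)} = 0 where ρ_i^{(A)}, ρ_i^{(B)} are the reduced density matrices of |ψ_i⟩ on A and B. Then the entanglement entropy of (1/√2)(|ψ₀⟩ + |ψ₁⟩) with respect to (A,B) equals ½(S(ρ₀^{(A)}) + S(ρ₁^{(A)})) + log 2. -/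
open scoped BigOperators

noncomputable def vN {d : Type*} [Fintype d] [DecidableEq d] (ρ : Matrix d d ℂ) : ℝ :=
  if h : ρ.IsHermitian then ∑ i, Real.negMulLog (h.eigenvalues i) else 0

noncomputable def outer {α : Type*} (ψ : α → ℂ) : Matrix α α ℂ :=
  Matrix.of fun x y => ψ x * star (ψ y)

noncomputable def ptraceB {A B : Type*} [Fintype B] (ρ : Matrix (A × B) (A × B) ℂ) :
    Matrix A A ℂ :=
  Matrix.of fun a a' => ∑ b, ρ (a, b) (a', b)

noncomputable def ptraceA {A B : Type*} [Fintype A] (ρ : Matrix (A × B) (A × B) ℂ) :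
    Matrix B B ℂ :=
  Matrix.of fun b b' => ∑ a, ρ (a, b) (a, b')

open Matrix Polynomial in
theorem aux_sum_roots {n : Type*} [Fintype n] [DecidableEq n] {M : Matrix n n ℂ}
    (hM : M.IsHermitian) (f : ℝ → ℝ) :
    ∑ i, f (hM.eigenvalues i) = (M.charpoly.roots.map (fun z => f z.re)).sum := by
  rw [hM.roots_charpoly_eq_eigenvalues, Multiset.map_map]
  simp

open Matrix Polynomial in
theorem aux_charpoly_mul {n : Type*} [Fintype n] [DecidableEq n] (M N : Matrix n n ℂ)
    (h : M * N = 0) :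
    M.charpoly * N.charpoly = X ^ Fintype.card n * (M + N).charpoly := by
  have h2 : M.map (C : ℂ →+* ℂ[X]) * N.map (C : ℂ →+* ℂ[X]) = 0 := by
    rw [← Matrix.map_mul, h]; ext; simp
  have key : charmatrix M * charmatrix N = (X : ℂ[X]) • charmatrix (M + N) := by
    have e : ∀ M : Matrix n n ℂ, charmatrix M = (X : ℂ[X]) • (1 : Matrix n n ℂ[X])
        - M.map (C : ℂ →+* ℂ[X]) := by
      intro M
      rw [Matrix.smul_one_eq_diagonal]
      rfl
    rw [e, e, e, sub_mul, mul_sub, mul_sub, h2]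
    have e3 : (M + N).map (C : ℂ →+* ℂ[X]) = M.map (C : ℂ →+* ℂ[X]) + N.map (C : ℂ →+* ℂ[X]) := by
      ext; simp
    rw [e3]
    simp only [smul_mul_assoc, one_mul, mul_smul_comm, mul_one, smul_sub, smul_add]
    abel
  unfold charpoly
  rw [← det_mul, key, det_smul]

open Matrix Polynomial in
theorem aux_sum_add {n : Type*} [Fintype n] [DecidableEq n] {M N : Matrix n n ℂ}
    (hM : M.IsHermitian) (hN : N.IsHermitian) (hS : (M + N).IsHermitian) (h : M * N = 0)
    (f : ℝ → ℝ) (hf : f 0 = 0) :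
    ∑ i, f (hS.eigenvalues i) = ∑ i, f (hM.eigenvalues i) + ∑ i, f (hN.eigenvalues i) := by
  rw [aux_sum_roots, aux_sum_roots, aux_sum_roots, ← Multiset.sum_add, ← Multiset.map_add,
    ← roots_mul (mul_ne_zero (charpoly_monic M).ne_zero (charpoly_monic N).ne_zero),
    aux_charpoly_mul M N h,
    roots_mul (mul_ne_zero (pow_ne_zero _ X_ne_zero) (charpoly_monic _).ne_zero)]
  simp [hf, Multiset.map_nsmul, Multiset.sum_nsmul]

open Matrix Polynomial in
theorem aux_sum_smul {n : Type*} [Fintype n] [DecidableEq n] {M : Matrix n n ℂ} (c : ℝ)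
    (hM : M.IsHermitian) (hc : ((c : ℂ) • M).IsHermitian) (f : ℝ → ℝ) :
    ∑ i, f (hc.eigenvalues i) = ∑ i, f (c * hM.eigenvalues i) := by
  have h : ((c : ℂ) • M).charpoly = ∏ i, (X - C ((c * hM.eigenvalues i : ℝ) : ℂ)) := by
    conv_lhs => rw [hM.spectral_theorem, ← map_smul, Unitary.conjStarAlgAut_apply,
      charpoly_mul_comm, ← mul_assoc, ← diagonal_smul]
    rw [Unitary.coe_star_mul_self, one_mul, charpoly_diagonal]
    simp
  rw [aux_sum_roots, h, roots_prod]
  · simp only [roots_X_sub_C, Multiset.bind_singleton, Multiset.map_map]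
    simp
  · exact Finset.prod_ne_zero_iff.mpr fun i _ => X_sub_C_ne_zero _

open Matrix in
theorem aux_ptraceB {A B : Type*} [Fintype A] [Fintype B] (ψ : A × B → ℂ) :
    ptraceB (outer ψ) = (of fun a b => ψ (a, b)) * (of fun a b => ψ (a, b))ᴴ := by
  ext i j
  simp [ptraceB, outer, mul_apply]

open Matrix in
theorem aux_ptraceA {A B : Type*} [Fintype A] [Fintype B] (ψ : A × B → ℂ) :
    ptraceA (outer ψ) = ((of fun a b => ψ (a, b))ᴴ * (of fun a b => ψ (a, b)))ᵀ := by
  ext i j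
  simp [ptraceA, outer, mul_apply, mul_comm]

open Matrix in
theorem aux_half {A B : Type*} [Fintype A] [DecidableEq A] [Fintype B]
    (ψ : A × B → ℂ) (h : ∑ x, ‖ψ x‖ ^ 2 = 1) (hM : (ptraceB (outer ψ)).IsHermitian) :
    ∑ i, Real.negMulLog ((1 / 2) * hM.eigenvalues i)
      = vN (ptraceB (outer ψ)) / 2 + Real.log 2 / 2 := by
  have ht : ∑ i, hM.eigenvalues i = 1 := by
    have h1 := hM.trace_eq_sum_eigenvalues
    have h2 : (ptraceB (outer ψ)).trace = ((∑ x, ‖ψ x‖ ^ 2 : ℝ) : ℂ) := by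
      simp [trace, ptraceB, outer, Fintype.sum_prod_type, Complex.mul_conj, Complex.normSq_eq_norm_sq]
    rw [h2, h] at h1
    have h3 : ((∑ i, hM.eigenvalues i : ℝ) : ℂ) = ((1 : ℝ) : ℂ) := by
      rw [h1]; simp
    exact_mod_cast h3
  have e : Real.negMulLog (1 / 2) = Real.log 2 / 2 := by
    simp [Real.negMulLog, Real.log_inv]; ring
  simp only [vN, dif_pos hM, Real.negMulLog_mul, Finset.sum_add_distrib, ← Finset.sum_mul,
    ← Finset.mul_sum, ht, e]
  ring

/-- Lemma 4.13 of Bouland et al.: if `|ψ₀⟩, |ψ₁⟩` are cutwise orthogonal with respect to the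
bipartition `(A,B)`, then the entanglement entropy of `(|ψ₀⟩+|ψ₁⟩)/√2` with respect to `(A,B)`
equals `(S(ρ₀^A) + S(ρ₁^A))/2 + log 2`. -/
theorem cutwise_orthogonal_entanglement
    {A B : Type*} [Fintype A] [DecidableEq A] [Fintype B] [DecidableEq B]
    (ψ₀ ψ₁ : A × B → ℂ)
    (h₀ : ∑ x, ‖ψ₀ x‖ ^ 2 = 1) (h₁ : ∑ x, ‖ψ₁ x‖ ^ 2 = 1)
    (hcutA : ptraceB (outer ψ₀) * ptraceB (outer ψ₁) = 0)
    (hcutB : ptraceA (outer ψ₀) * ptraceA (outer ψ₁) = 0) :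
    vN (ptraceB (outer fun x => ((Real.sqrt 2 : ℝ) : ℂ)⁻¹ * (ψ₀ x + ψ₁ x)))
      = (vN (ptraceB (outer ψ₀)) + vN (ptraceB (outer ψ₁))) / 2 + Real.log 2 := by
  have hM := aux_ptraceB ψ₀
  have hN := aux_ptraceB ψ₁
  have hH₀ : (ptraceB (outer ψ₀)).IsHermitian := by
    rw [hM]; exact Matrix.isHermitian_mul_conjTranspose_self _
  have hH₁ : (ptraceB (outer ψ₁)).IsHermitian := by
    rw [hN]; exact Matrix.isHermitian_mul_conjTranspose_self _
  have hz : (Matrix.of fun a b => ψ₁ (a, b)) * (Matrix.of fun a b => ψ₀ (a, b)).conjTranspose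
      = 0 := by
    open scoped ComplexOrder in
    rw [aux_ptraceA, aux_ptraceA, ← Matrix.transpose_mul, Matrix.transpose_eq_zero,
      Matrix.mul_assoc, ← Matrix.mul_assoc, Matrix.mul_conjTranspose_mul_self_eq_zero,
      Matrix.mul_assoc, ← Matrix.mul_assoc, Matrix.conjTranspose_mul_self_mul_eq_zero] at hcutB
    exact hcutB
  have hz' : (Matrix.of fun a b => ψ₀ (a, b)) * (Matrix.of fun a b => ψ₁ (a, b)).conjTranspose
      = 0 := by
    have := congrArg Matrix.conjTranspose hz
    simpa [Matrix.conjTranspose_mul] using this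
  have hsum : ptraceB (outer fun x => ((Real.sqrt 2 : ℝ) : ℂ)⁻¹ * (ψ₀ x + ψ₁ x))
      = (((1 / 2 : ℝ)) : ℂ) • (ptraceB (outer ψ₀) + ptraceB (outer ψ₁)) := by
    have e : (Matrix.of fun a b => ((Real.sqrt 2 : ℝ) : ℂ)⁻¹ * (ψ₀ (a, b) + ψ₁ (a, b)))
        = ((Real.sqrt 2 : ℝ) : ℂ)⁻¹ •
          ((Matrix.of fun a b => ψ₀ (a, b)) + (Matrix.of fun a b => ψ₁ (a, b))) := by
      ext; simp
    have e2 : ((Real.sqrt 2 : ℝ) : ℂ)⁻¹ * ((Real.sqrt 2 : ℝ) : ℂ)⁻¹ = ((1 / 2 : ℝ) : ℂ) := by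
      rw [← mul_inv, ← Complex.ofReal_mul, Real.mul_self_sqrt (by norm_num)]
      norm_num
    rw [aux_ptraceB, hM, hN, e, Matrix.conjTranspose_smul, Matrix.conjTranspose_add,
      Matrix.smul_mul, Matrix.mul_smul, smul_smul, Matrix.add_mul, Matrix.mul_add, Matrix.mul_add,
      hz, hz', ← e2]
    simp
  have hS := hH₀.add hH₁
  have hc : ((((1 / 2 : ℝ)) : ℂ) • (ptraceB (outer ψ₀) + ptraceB (outer ψ₁))).IsHermitian := by
    rw [← hsum, aux_ptraceB]; exact Matrix.isHermitian_mul_conjTranspose_self _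
  rw [hsum]
  conv_lhs => rw [vN, dif_pos hc]
  rw [aux_sum_smul _ hS hc,
    aux_sum_add hH₀ hH₁ hS hcutA (fun x => Real.negMulLog ((1 / 2) * x)) (by simp),
    aux_half ψ₀ h₀ hH₀, aux_half ψ₁ h₁ hH₁]
  ring
end

section
/- Let p = 17, let q be a prime with q ≥ 2p, and let m ≥ 1. Define for A ∈ ℤ_q^{m×m} the function h_A : {0,1}^m → ℤ_p^m by h_A(x) = ⌊A·x⌋^s_p (coordinatewise shifted rounding). Then for a uniformly random A ← ℤ_q^{m×m}, the probability that h_A is injective is at least 1 − 2^{2m}·(1/p + 1/q)^m; in particular, since 1/p + 1/q ≤ 1/(p−1) = 1/16, this probability is at least 1 − 2^{−2m}. -/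
open scoped BigOperators

/-- Shifted rounding operation `⌊·⌋^s_p : ℤ_q → ℤ_p` (nearly-even bins, shifted by
`⌊⌊q/p⌋/2⌋`). -/
def sround (q p : ℕ) (x : ZMod q) : ZMod p :=
  ((((x.val + q / p / 2) % q) * p) / q : ℕ)

/-- `h_A(x) = ⌊A·x⌋^s_p` coordinatewise, for `x ∈ {0,1}^m` viewed as a 0/1 vector over `ℤ_q`. -/
def hfun (q m : ℕ) [NeZero q] (A : Matrix (Fin m) (Fin m) (ZMod q)) (x : Fin m → Bool) :
    Fin m → ZMod 17 :=
  fun i => sround q 17 (∑ j, A i j * (if x j then 1 else 0))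

lemma bin_card (q : ℕ) [NeZero q] (hq2 : 34 ≤ q) (c : ZMod 17) :
    q / 17 ≤ (Finset.univ.filter (fun x : ZMod q => sround q 17 x = c)).card ∧
    (Finset.univ.filter (fun x : ZMod q => sround q 17 x = c)).card ≤ q / 17 + 1 := by
  have hc : c.val < 17 := ZMod.val_lt c
  have key : (Finset.univ.filter (fun x : ZMod q => sround q 17 x = c)).card
      = (Finset.Ico ((c.val * q + 16) / 17) (((c.val + 1) * q + 16) / 17)).card := by
    have hs : ∀ x : ZMod q, sround q 17 x = c ↔
        (x + ((q / 17 / 2 : ℕ) : ZMod q)).val * 17 / q = c.val := by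
      intro x
      have h1 : (x.val + q / 17 / 2) % q = (x + ((q / 17 / 2 : ℕ) : ZMod q)).val := by
        rw [ZMod.val_add, ZMod.val_natCast, Nat.add_mod_mod]
      unfold sround
      rw [h1]
      have hlt := ZMod.val_lt (x + ((q / 17 / 2 : ℕ) : ZMod q))
      generalize (x + ((q / 17 / 2 : ℕ) : ZMod q)).val = n at *
      have h2 : n * 17 / q < 17 := by
        rw [Nat.div_lt_iff_lt_mul (by omega)]; nlinarith
      constructor
      · intro h
        rw [← h, ZMod.val_natCast, Nat.mod_eq_of_lt h2]
      · intro h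
        rw [h, ZMod.natCast_zmod_val]
    have hi : ∀ n : ℕ, n * 17 / q = c.val ↔
        n ∈ Finset.Ico ((c.val * q + 16) / 17) (((c.val + 1) * q + 16) / 17) := by
      intro n
      have hqp : 0 < q := by omega
      have h1 : c.val ≤ n * 17 / q ↔ c.val * q ≤ n * 17 := Nat.le_div_iff_mul_le hqp
      have h2 : n * 17 / q < c.val + 1 ↔ n * 17 < (c.val + 1) * q := Nat.div_lt_iff_lt_mul hqp
      rw [Finset.mem_Ico]
      rw [add_mul] at h2 ⊢
      generalize c.val * q = z at *
      omega
    have hub : ∀ n ∈ Finset.Ico ((c.val * q + 16) / 17) (((c.val + 1) * q + 16) / 17), n < q := by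
      intro n hn
      rw [Finset.mem_Ico] at hn
      have : (c.val + 1) * q ≤ 17 * q := Nat.mul_le_mul_right _ (by omega)
      omega
    apply Finset.card_nbij' (fun x => (x + ((q / 17 / 2 : ℕ) : ZMod q)).val)
      (fun n => (n : ZMod q) - ((q / 17 / 2 : ℕ) : ZMod q))
    · intro x hx
      have hx' : sround q 17 x = c := by simpa using hx
      exact (hi _).1 ((hs x).1 hx')
    · intro n hn
      have hn' := hub n hn
      have : sround q 17 ((n : ZMod q) - ((q / 17 / 2 : ℕ) : ZMod q)) = c := by
        rw [hs, sub_add_cancel, ZMod.val_natCast, Nat.mod_eq_of_lt hn']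
        exact (hi _).2 hn
      simpa using this
    · intro x _
      simp
    · intro n hn
      have hn' := hub n hn
      simp only [sub_add_cancel]
      rw [ZMod.val_natCast, Nat.mod_eq_of_lt hn']
  rw [key, Nat.card_Ico, add_mul]
  generalize c.val * q = z
  omega

/-- number of colliding pairs -/
lemma coll_card (q : ℕ) [NeZero q] (hq2 : 34 ≤ q) :
    16 * ∑ t : ZMod q, (Finset.univ.filter (fun s : ZMod q => sround q 17 s = sround q 17 t)).card
      ≤ q ^ 2 := by
  set b : ZMod 17 → ℕ := fun c =>
    (Finset.univ.filter (fun x : ZMod q => sround q 17 x = c)).card with hb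
  have h1 : ∑ t : ZMod q, (Finset.univ.filter
      (fun s : ZMod q => sround q 17 s = sround q 17 t)).card = ∑ c, b c * b c := by
    rw [← Finset.sum_fiberwise (s := Finset.univ) (g := fun t : ZMod q => sround q 17 t)]
    refine Finset.sum_congr rfl fun c _ => ?_
    rw [Finset.sum_congr rfl (g := fun _ => b c)]
    · simp [hb]
    · intro t ht
      have : sround q 17 t = c := by simpa using ht
      simp only [this, hb]
  have h2 : ∑ c, b c = q := by
    have := Finset.card_eq_sum_card_fiberwise (s := (Finset.univ : Finset (ZMod q)))
      (t := (Finset.univ : Finset (ZMod 17))) (f := fun t : ZMod q => sround q 17 t) (by simp)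
    simp only [Finset.card_univ, ZMod.card] at this
    exact this.symm
  have h3 : ∀ c, b c * b c + (q / 17) * (q / 17 + 1) ≤ (2 * (q / 17) + 1) * b c := by
    intro c
    obtain ⟨h, h'⟩ := bin_card q hq2 c
    change q / 17 ≤ b c at h
    change b c ≤ _ at h'
    have : b c = q / 17 ∨ b c = q / 17 + 1 := by omega
    rcases this with h | h <;> rw [h] <;> nlinarith
  have h4 := Finset.sum_le_sum (s := Finset.univ) fun c _ => h3 c
  rw [Finset.sum_add_distrib, ← Finset.mul_sum Finset.univ b, h2] at h4
  simp only [Finset.sum_const, Finset.card_univ, ZMod.card, smul_eq_mul] at h4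
  rw [h1]
  have hk : 2 ≤ q / 17 := by omega
  generalize q / 17 = k at *
  generalize ∑ c, b c * b c = S at *
  zify at *
  nlinarith [sq_nonneg ((q:ℤ) - 8 * (2 * k + 1)), mul_nonneg (sub_nonneg.2 hk) (sub_nonneg.2 hk)]

def dotb (q m : ℕ) (x : Fin m → Bool) (a : Fin m → ZMod q) : ZMod q :=
  ∑ j, a j * (if x j then 1 else 0)

lemma dotb_add (q m : ℕ) (x : Fin m → Bool) (a b : Fin m → ZMod q) :
    dotb q m x (a + b) = dotb q m x a + dotb q m x b := by
  simp only [dotb, Pi.add_apply, add_mul, Finset.sum_add_distrib]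

lemma dotb_single (q m : ℕ) (x : Fin m → Bool) (j : Fin m) (t : ZMod q) :
    dotb q m x (Pi.single j t) = if x j then t else 0 := by
  unfold dotb
  rw [Finset.sum_eq_single j]
  · simp
  · intro i _ hi
    simp [hi]
  · simp

def rowBad (q m : ℕ) [NeZero q] (x y : Fin m → Bool) : Finset (Fin m → ZMod q) :=
  Finset.univ.filter fun a => sround q 17 (dotb q m x a) = sround q 17 (dotb q m y a)

lemma rowBad_symm (q m : ℕ) [NeZero q] (x y : Fin m → Bool) :
    rowBad q m x y = rowBad q m y x := by
  ext a; simp [rowBad, eq_comm]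

lemma rowBad_card (q m : ℕ) [NeZero q] (x y : Fin m → Bool) (v : Fin m → ZMod q) :
    (rowBad q m x y).card = ∑ a : Fin m → ZMod q,
      if sround q 17 (dotb q m x a + dotb q m x v)
        = sround q 17 (dotb q m y a + dotb q m y v) then 1 else 0 := by
  rw [rowBad, Finset.card_filter, ← Equiv.sum_comp (Equiv.addRight v)]
  simp [dotb_add]

lemma count_shift (q : ℕ) [NeZero q] (u : ZMod q) (c : ZMod 17) :
    (∑ s : ZMod q, if sround q 17 (u + s) = c then 1 else 0)
      = (Finset.univ.filter (fun x : ZMod q => sround q 17 x = c)).card := by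
  rw [Finset.card_filter]
  exact Equiv.sum_comp (Equiv.addLeft u) (fun x => if sround q 17 x = c then 1 else 0)

lemma exists_diff {m : ℕ} {x y : Fin m → Bool} (h : x ≠ y) :
    (∃ j, x j = true ∧ y j = false) ∨ (∃ j, y j = true ∧ x j = false) := by
  obtain ⟨j, hj⟩ := Function.ne_iff.1 h
  cases hx : x j <;> cases hy : y j
  · simp_all
  · exact Or.inr ⟨j, hy, hx⟩
  · exact Or.inl ⟨j, hx, hy⟩
  · simp_all

lemma row1_aux (q m : ℕ) [NeZero q] (hq2 : 34 ≤ q) (x y : Fin m → Bool) (j : Fin m)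
    (hx : x j = true) (hy : y j = false) :
    q * (rowBad q m x y).card ≤ q ^ m * (q / 17 + 1) := by
  have h : q * (rowBad q m x y).card = ∑ t : ZMod q, (rowBad q m x y).card := by simp
  rw [h, Finset.sum_congr rfl fun t _ => rowBad_card q m x y (Pi.single j t), Finset.sum_comm]
  simp only [dotb_single, hx, hy, if_true, Bool.false_eq_true, if_false, count_shift]
  refine (Finset.sum_le_sum fun a _ => (bin_card q hq2 _).2).trans ?_
  simp

lemma row1 (q m : ℕ) [NeZero q] (hq2 : 34 ≤ q) (x y : Fin m → Bool) (h : x ≠ y) :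
    q * (rowBad q m x y).card ≤ q ^ m * (q / 17 + 1) := by
  rcases exists_diff h with ⟨j, h1, h2⟩ | ⟨j, h1, h2⟩
  · exact row1_aux q m hq2 x y j h1 h2
  · rw [rowBad_symm]; exact row1_aux q m hq2 y x j h1 h2

lemma row2_aux (q m : ℕ) [NeZero q] (hq2 : 34 ≤ q) (x y : Fin m → Bool) (j k : Fin m)
    (hx : x j = true) (hy : y j = false) (hk : y k = true) :
    16 * (rowBad q m x y).card ≤ q ^ m := by
  have h : q ^ 2 * (rowBad q m x y).card
      = ∑ t : ZMod q, ∑ s : ZMod q, (rowBad q m x y).card := by simp; ring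
  have h' : q ^ 2 * (rowBad q m x y).card = q ^ m * ∑ t : ZMod q,
      (Finset.univ.filter (fun s : ZMod q => sround q 17 s = sround q 17 t)).card := by
    rw [h, Finset.sum_congr rfl fun (t : ZMod q) _ =>
      Finset.sum_congr rfl fun (s : ZMod q) _ =>
        rowBad_card q m x y (Pi.single k t + Pi.single j s)]
    rw [Finset.sum_congr rfl fun t _ => Finset.sum_comm, Finset.sum_comm]
    simp only [dotb_add, dotb_single, hx, hy, hk, if_true, Bool.false_eq_true, if_false, add_zero,
      ← add_assoc]
    simp only [count_shift]
    have : ∀ a : Fin m → ZMod q, (∑ t : ZMod q, (Finset.univ.filter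
        (fun s : ZMod q => sround q 17 s = sround q 17 (dotb q m y a + t))).card)
        = ∑ t : ZMod q,
          (Finset.univ.filter (fun s : ZMod q => sround q 17 s = sround q 17 t)).card := by
      intro a
      exact Equiv.sum_comp (Equiv.addLeft (dotb q m y a)) (fun t => (Finset.univ.filter
        (fun s : ZMod q => sround q 17 s = sround q 17 t)).card)
    rw [Finset.sum_congr rfl fun a _ => this a]
    simp
  have hc := coll_card q hq2
  have hpos : 0 < q ^ 2 := by positivity
  refine Nat.le_of_mul_le_mul_left ?_ hpos
  calc q ^ 2 * (16 * (rowBad q m x y).card) = 16 * (q ^ 2 * (rowBad q m x y).card) := by ring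
    _ = q ^ m * (16 * ∑ t : ZMod q,
      (Finset.univ.filter (fun s : ZMod q => sround q 17 s = sround q 17 t)).card) := by
        rw [h']; ring
    _ ≤ q ^ m * q ^ 2 := Nat.mul_le_mul_left _ hc
    _ = q ^ 2 * q ^ m := by ring

lemma exists_true {m : ℕ} {x : Fin m → Bool} (h : x ≠ fun _ => false) : ∃ k, x k = true := by
  obtain ⟨k, hk⟩ := Function.ne_iff.1 h
  exact ⟨k, by simpa using hk⟩

lemma row2 (q m : ℕ) [NeZero q] (hq2 : 34 ≤ q) (x y : Fin m → Bool) (h : x ≠ y)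
    (hx : x ≠ fun _ => false) (hy : y ≠ fun _ => false) :
    16 * (rowBad q m x y).card ≤ q ^ m := by
  obtain ⟨k, hk⟩ := exists_true hx
  obtain ⟨l, hl⟩ := exists_true hy
  rcases exists_diff h with ⟨j, h1, h2⟩ | ⟨j, h1, h2⟩
  · exact row2_aux q m hq2 x y j l h1 h2 hl
  · rw [rowBad_symm]; exact row2_aux q m hq2 y x j k h1 h2 hk

lemma mat_card (q m : ℕ) [NeZero q] (x y : Fin m → Bool) :
    (Finset.univ.filter (fun A : Matrix (Fin m) (Fin m) (ZMod q) =>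
      hfun q m A x = hfun q m A y)).card = (rowBad q m x y).card ^ m := by
  have h : (Fintype.piFinset (fun _ : Fin m => rowBad q m x y)).card
      = (rowBad q m x y).card ^ m := by
    rw [Fintype.card_piFinset]; simp
  rw [← h]
  refine Finset.card_equiv Matrix.of.symm fun A => ?_
  rw [Fintype.mem_piFinset]
  simp only [Finset.mem_filter, Finset.mem_univ, true_and, rowBad, funext_iff]
  rfl

open Classical in
/-- Double counting: twice the number of non-injective matrices. -/
lemma double_count (q m : ℕ) [NeZero q] :
    2 * (Finset.univ.filter (fun A : Matrix (Fin m) (Fin m) (ZMod q) =>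
      ¬ Function.Injective (hfun q m A))).card
      ≤ ∑ x : Fin m → Bool, ∑ y : Fin m → Bool,
        if x = y then 0 else (rowBad q m x y).card ^ m := by
  have h : ∀ x y : Fin m → Bool, (if x = y then 0 else (rowBad q m x y).card ^ m)
      = ∑ A : Matrix (Fin m) (Fin m) (ZMod q),
        if x ≠ y ∧ hfun q m A x = hfun q m A y then 1 else 0 := by
    intro x y
    split_ifs with h
    · simp [h]
    · rw [← mat_card, Finset.card_filter]; simp [h]
  simp only [h]
  rw [Finset.sum_congr rfl fun x _ => Finset.sum_comm, Finset.sum_comm, Finset.card_filter,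
    Finset.mul_sum]
  refine Finset.sum_le_sum fun A _ => ?_
  by_cases hA : Function.Injective (hfun q m A)
  · simp [hA]
  rw [if_pos hA]
  rw [← Finset.sum_product', ← Finset.card_filter]
  simp only [Function.Injective, not_forall] at hA
  obtain ⟨x, y, hxy, hne⟩ := hA
  have : ({(x, y), (y, x)} : Finset ((Fin m → Bool) × (Fin m → Bool))).card = 2 :=
    Finset.card_pair (by simp [hne])
  rw [mul_one, ← this]
  apply Finset.card_le_card
  intro z hz
  simp only [Finset.mem_insert, Finset.mem_singleton] at hz
  rcases hz with rfl | rfl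
  · simpa [hne] using hxy
  · simpa [Ne.symm hne] using hxy.symm

open Classical in
lemma card_inj (q m : ℕ) [NeZero q] :
    (Nat.card {A : Matrix (Fin m) (Fin m) (ZMod q) // Function.Injective (hfun q m A)} : ℝ)
      = (q : ℝ) ^ (m * m) - ((Finset.univ.filter
        (fun A : Matrix (Fin m) (Fin m) (ZMod q) => ¬ Function.Injective (hfun q m A))).card : ℝ)
    := by
  rw [Nat.card_eq_fintype_card, Fintype.card_subtype, eq_sub_iff_add_eq]
  norm_cast
  rw [Finset.card_filter_add_card_filter_not, Finset.card_univ,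
    Fintype.card_congr (Matrix.of (m := Fin m) (n := Fin m) (α := ZMod q)).symm]
  simp only [Fintype.card_fun, ZMod.card, Fintype.card_fin]
  rw [pow_mul]

lemma num_bound (m : ℕ) (hm : 1 ≤ m) :
    ((2:ℝ) ^ m - 1) * (2 ^ m - 2) + 2 * (2 ^ m - 1) * (24 / 17) ^ m ≤ 2 * (2 ^ m) ^ 2 := by
  obtain rfl | h2 : m = 1 ∨ 2 ≤ m := by omega
  · norm_num
  have h : (24 / 17 : ℝ) ^ m ≤ 2 ^ m / 2 := by
    obtain ⟨n, rfl⟩ := Nat.exists_eq_add_of_le h2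
    rw [pow_add, pow_add]
    have : (24 / 17 : ℝ) ^ n ≤ 2 ^ n := pow_le_pow_left₀ (by norm_num) (by norm_num) n
    have h0 : (0:ℝ) < 2 ^ n := by positivity
    nlinarith
  have h1 : (1:ℝ) ≤ 2 ^ m := one_le_pow₀ (by norm_num)
  nlinarith [mul_le_mul_of_nonneg_left h (sub_nonneg.2 h1)]

/-- Lemma (rounding is injective w.h.p.): for `p = 17`, a prime `q ≥ 2p` and `m ≥ 1`,
a uniformly random `A ∈ ℤ_q^{m×m}` yields an injective `h_A` with probability at least
`1 − 2^{2m}·(1/p + 1/q)^m`, and in particular at least `1 − 2^{−2m}`. -/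
theorem hfun_injective_whp (q m : ℕ) (hq : q.Prime) (hq2 : 34 ≤ q) (hm : 1 ≤ m) [NeZero q] :
    (1 : ℝ) - 2 ^ (2 * m) * (1 / 17 + 1 / q) ^ m
      ≤ (Nat.card {A : Matrix (Fin m) (Fin m) (ZMod q) // Function.Injective (hfun q m A)} : ℝ)
          / (q ^ (m * m)) ∧
    (1 : ℝ) - (2 : ℝ) ^ (-(2 * (m : ℤ)))
      ≤ (Nat.card {A : Matrix (Fin m) (Fin m) (ZMod q) // Function.Injective (hfun q m A)} : ℝ)
          / (q ^ (m * m)) := by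
  classical
  have hq0 : (0:ℝ) < q := by exact_mod_cast (by omega : 0 < q)
  have hq34 : (34:ℝ) ≤ q := by exact_mod_cast hq2
  have hQ : (0:ℝ) < (q:ℝ) ^ (m * m) := by positivity
  have hdc := double_count q m
  rw [card_inj]
  set B := (Finset.univ.filter
        (fun A : Matrix (Fin m) (Fin m) (ZMod q) => ¬ Function.Injective (hfun q m A))).card
  have hdc' : 2 * (B : ℝ) ≤ ∑ x : Fin m → Bool, ∑ y : Fin m → Bool,
        if x = y then 0 else ((rowBad q m x y).card : ℝ) ^ m := by
    exact_mod_cast hdc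
  have hr1 : ∀ x y : Fin m → Bool, x ≠ y →
      ((rowBad q m x y).card : ℝ) ^ m ≤ (q:ℝ) ^ (m * m) * (1 / 17 + 1 / q) ^ m := by
    intro x y hxy
    rw [pow_mul, ← mul_pow]
    apply pow_le_pow_left₀ (by positivity)
    have h := row1 q m hq2 x y hxy
    have h' : (q:ℝ) * (rowBad q m x y).card ≤ q ^ m * ((q / 17 : ℕ) + 1) := by exact_mod_cast h
    have h3 : ((q / 17 : ℕ) : ℝ) ≤ q / 17 := by exact_mod_cast Nat.cast_div_le (α := ℝ)
    have h4 : (q:ℝ) ^ m * ((q / 17 : ℕ) + 1) ≤ q ^ m * (q / 17 + 1) := by gcongr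
    have h5 : (q:ℝ) ^ m * (q / 17 + 1) = q * (q ^ m * (1 / 17 + 1 / q)) := by
      field_simp
    exact le_of_mul_le_mul_left (by linarith) hq0
  have hr2 : ∀ x y : Fin m → Bool, x ≠ y → (x ≠ fun _ => false) → (y ≠ fun _ => false) →
      ((rowBad q m x y).card : ℝ) ^ m ≤ (q:ℝ) ^ (m * m) * (1 / 16) ^ m := by
    intro x y hxy hx hy
    rw [pow_mul, ← mul_pow]
    apply pow_le_pow_left₀ (by positivity)
    have h := row2 q m hq2 x y hxy hx hy
    have h' : (16:ℝ) * (rowBad q m x y).card ≤ q ^ m := by exact_mod_cast h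
    linarith
  have fin : ∀ c : ℝ, (B:ℝ) ≤ (q:ℝ) ^ (m * m) * c →
      1 - c ≤ ((q:ℝ) ^ (m * m) - B) / q ^ (m * m) := by
    intro c h
    rw [le_div_iff₀ hQ]
    linarith
  constructor
  · apply fin
    have : ∑ x : Fin m → Bool, ∑ y : Fin m → Bool,
        (if x = y then 0 else ((rowBad q m x y).card : ℝ) ^ m)
        ≤ ∑ x : Fin m → Bool, ∑ y : Fin m → Bool,
          (q:ℝ) ^ (m * m) * (1 / 17 + 1 / q) ^ m := by
      refine Finset.sum_le_sum fun x _ => Finset.sum_le_sum fun y _ => ?_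
      split_ifs with h
      · positivity
      · exact hr1 x y h
    simp only [Finset.sum_const, Finset.card_univ, Fintype.card_fun, Fintype.card_bool,
      Fintype.card_fin, nsmul_eq_mul, Nat.cast_pow, Nat.cast_ofNat] at this
    have hB : (0:ℝ) ≤ B := by positivity
    have e : (2:ℝ) ^ (2 * m) = 2 ^ m * 2 ^ m := by rw [two_mul, pow_add]
    rw [e]
    linarith
  · apply fin
    set z : Fin m → Bool := fun _ => false with hz
    set P := (q:ℝ) ^ (m * m) * (1 / 16) ^ m with hP
    set R := (q:ℝ) ^ (m * m) * (3 / 34) ^ m with hR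
    have hr3 : ∀ x y : Fin m → Bool, x ≠ y → ((rowBad q m x y).card : ℝ) ^ m ≤ R := by
      intro x y hxy
      refine (hr1 x y hxy).trans ?_
      have : (1:ℝ) / q ≤ 1 / 34 := one_div_le_one_div_of_le (by norm_num) hq34
      rw [hR]
      gcongr
      linarith
    have hP0 : 0 ≤ P := by positivity
    have hR0 : 0 ≤ R := by positivity
    -- pointwise bound by an explicit function
    have hpt : ∀ x y : Fin m → Bool,
        (if x = y then 0 else ((rowBad q m x y).card : ℝ) ^ m)
        ≤ P - (if x = y then P else 0) + (if x = z then R - P else 0)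
          + (if y = z then R - P else 0)
          + (if x = z then (if y = z then 2 * P - 2 * R else 0) else 0) := by
      intro x y
      by_cases hxy : x = y
      · subst hxy
        by_cases hx : x = z
        · simp only [hx, if_true]; linarith
        · simp [hx]
      · by_cases hx : x = z
        · have hy : y ≠ z := fun h => hxy (hx.trans h.symm)
          have := hr3 x y hxy
          simp only [hxy, hx, hy, if_true, if_false] at this ⊢
          rw [if_neg (fun h => hy h.symm)]
          rw [if_neg (fun h => hy h.symm)]
          linarith
        · by_cases hy : y = z
          · have := hr3 x y hxy
            simp only [hxy, hx, if_false]
            rw [if_pos hy]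
            linarith
          · have := hr2 x y hxy hx hy
            simp only [hxy, hx, hy, if_false]
            linarith
    have hsum := Finset.sum_le_sum (s := Finset.univ) fun x _ =>
      Finset.sum_le_sum (s := Finset.univ) fun y _ => hpt x y
    have hcalc : ∑ x : Fin m → Bool, ∑ y : Fin m → Bool,
        (P - (if x = y then P else 0) + (if x = z then R - P else 0)
          + (if y = z then R - P else 0)
          + (if x = z then (if y = z then 2 * P - 2 * R else 0) else 0))
        = (2 ^ m - 1) * (2 ^ m - 2) * P + 2 * (2 ^ m - 1) * R := by
      have hin : ∀ x : Fin m → Bool, ∑ y : Fin m → Bool,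
        (P - (if x = y then P else 0) + (if x = z then R - P else 0)
          + (if y = z then R - P else 0)
          + (if x = z then (if y = z then 2 * P - 2 * R else 0) else 0))
          = (2 ^ m * P - P + (R - P)) +
            if x = z then (2 ^ m * (R - P) + (2 * P - 2 * R)) else 0 := by
        intro x
        simp only [Finset.sum_add_distrib, Finset.sum_sub_distrib]
        by_cases hx : x = z
        · simp [hx]; ring
        · simp [hx]
      rw [Finset.sum_congr rfl fun x _ => hin x, Finset.sum_add_distrib]
      simp
      ring
    rw [hcalc] at hsum
    have hnum := num_bound m hm
    have hRP : R = P * (24 / 17) ^ m := by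
      rw [hR, hP, mul_assoc, ← mul_pow]; norm_num
    have hfin : (2:ℝ) ^ (-(2 * (m : ℤ))) = (2 ^ m) ^ 2 * (1 / 16) ^ m := by
      rw [zpow_neg, zpow_mul, zpow_natCast, ← pow_mul, mul_comm m 2, pow_mul, ← mul_pow, ← inv_pow]
      norm_num
    have h6 := mul_le_mul_of_nonneg_left hnum hP0
    rw [hfin]
    have h7 : (q:ℝ) ^ (m * m) * ((2 ^ m) ^ 2 * (1 / 16) ^ m) = P * (2 ^ m) ^ 2 := by
      rw [hP]; ring
    rw [h7]
    rw [hRP] at hsum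
    linarith
end

section
/- Let ρ and σ be density matrices on a finite-dimensional bipartite Hilbert space H_A ⊗ H_B with ½‖ρ − σ‖₁ ≤ ε ≤ 1. Then |S(ρ_A) − S(σ_A)| ≤ 2ε·log d_A + (1+ε)·h(ε/(1+ε)), where d_A = dim H_A, S is the von Neumann entropy, ρ_A, σ_A are the reduced states on A, and h is the binary entropy function. -/
open scoped BigOperators ComplexOrder

/-- Trace norm of a Hermitian matrix: sum of absolute values of eigenvalues. -/
noncomputable def trNorm {d : Type*} [Fintype d] [DecidableEq d] (M : Matrix d d ℂ) : ℝ :=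
  if h : M.IsHermitian then ∑ i, |h.eigenvalues i| else 0

/-- Binary entropy function `h(x) = −x log x − (1−x) log(1−x)`. -/
noncomputable def binEnt (x : ℝ) : ℝ := Real.negMulLog x + Real.negMulLog (1 - x)

lemma quad_form_eq {E : Type*} [NormedAddCommGroup E] [InnerProductSpace ℂ E]
    [FiniteDimensional ℂ E] {n : ℕ} (hn : Module.finrank ℂ E = n) {S : E →ₗ[ℂ] E}
    (hS : S.IsSymmetric) (x : E) :
    (inner ℂ x (S x)).re
      = ∑ j, hS.eigenvalues hn j * ‖inner ℂ (hS.eigenvectorBasis hn j) x‖ ^ 2 := by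
  rw [← (hS.eigenvectorBasis hn).sum_inner_mul_inner x (S x), Complex.re_sum]
  refine Finset.sum_congr rfl fun j _ => ?_
  have h1 : inner ℂ (hS.eigenvectorBasis hn j) (S x)
      = (hS.eigenvalues hn j : ℂ) * inner ℂ (hS.eigenvectorBasis hn j) x := by
    rw [← hS, hS.apply_eigenvectorBasis, inner_smul_left]
    simp
  rw [h1, ← inner_conj_symm x, ← Complex.normSq_eq_norm_sq]
  rw [mul_left_comm, ← Complex.normSq_eq_conj_mul_self, ← Complex.ofReal_mul, Complex.ofReal_re]

lemma weyl_mono {E : Type*} [NormedAddCommGroup E] [InnerProductSpace ℂ E]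
    [FiniteDimensional ℂ E] {n : ℕ} (hn : Module.finrank ℂ E = n) {S T : E →ₗ[ℂ] E}
    (hS : S.IsSymmetric) (hT : T.IsSymmetric)
    (h : ∀ x, (inner ℂ x (S x)).re ≤ (inner ℂ x (T x)).re) (i : Fin n) :
    hS.eigenvalues hn i ≤ hT.eigenvalues hn i := by
  set e := hS.eigenvectorBasis hn with he
  set f := hT.eigenvectorBasis hn with hf
  let F : E →ₗ[ℂ] ({j : Fin n // j ≠ i} → ℂ) := LinearMap.pi fun j =>
    if i < j.1 then (innerSL ℂ (e j.1)).toLinearMap else (innerSL ℂ (f j.1)).toLinearMap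
  have hker : LinearMap.ker F ≠ ⊥ := by
    apply LinearMap.ker_ne_bot_of_finrank_lt
    rw [Module.finrank_fintype_fun_eq_card, hn, Fintype.card_subtype_compl]
    simp
    exact i.pos
  obtain ⟨x, hx, hx0⟩ := Submodule.exists_mem_ne_zero_of_ne_bot hker
  have hFx : ∀ j : {j : Fin n // j ≠ i}, F x j = 0 := fun j => by
    rw [LinearMap.mem_ker.mp hx]; rfl
  have h1 : ∀ j, i < j → inner ℂ (e j) x = 0 := fun j hj => by
    have := hFx ⟨j, hj.ne'⟩
    simpa [F, hj] using this
  have h2 : ∀ j, j < i → inner ℂ (f j) x = 0 := fun j hj => by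
    have := hFx ⟨j, hj.ne⟩
    simpa [F, hj.not_gt] using this
  have hpos : 0 < ‖x‖ ^ 2 := by positivity
  refine le_of_mul_le_mul_right ?_ hpos
  calc hS.eigenvalues hn i * ‖x‖ ^ 2
      = ∑ j, hS.eigenvalues hn i * ‖inner ℂ (e j) x‖ ^ 2 := by
        rw [← Finset.mul_sum, e.sum_sq_norm_inner_right]
    _ ≤ ∑ j, hS.eigenvalues hn j * ‖inner ℂ (e j) x‖ ^ 2 := by
        refine Finset.sum_le_sum fun j _ => ?_
        rcases lt_or_ge i j with hj | hj
        · simp [h1 j hj]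
        · exact mul_le_mul_of_nonneg_right (hS.eigenvalues_antitone hn hj) (by positivity)
    _ ≤ ∑ j, hT.eigenvalues hn j * ‖inner ℂ (f j) x‖ ^ 2 := by
        rw [← quad_form_eq hn hS, ← quad_form_eq hn hT]; exact h x
    _ ≤ ∑ j, hT.eigenvalues hn i * ‖inner ℂ (f j) x‖ ^ 2 := by
        refine Finset.sum_le_sum fun j _ => ?_
        rcases lt_or_ge j i with hj | hj
        · simp [h2 j hj]
        · exact mul_le_mul_of_nonneg_right (hT.eigenvalues_antitone hn hj) (by positivity)
    _ = hT.eigenvalues hn i * ‖x‖ ^ 2 := by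
        rw [← Finset.mul_sum, f.sum_sq_norm_inner_right]

lemma weyl_matrix {d : Type*} [Fintype d] [DecidableEq d] {X Y : Matrix d d ℂ}
    (hX : X.IsHermitian) (hY : Y.PosSemidef) (hXY : (X + Y).IsHermitian) (i : d) :
    hX.eigenvalues i ≤ hXY.eigenvalues i := by
  unfold Matrix.IsHermitian.eigenvalues Matrix.IsHermitian.eigenvalues₀
  apply weyl_mono
  intro x
  rw [map_add, LinearMap.add_apply, inner_add_right, Complex.add_re]
  have := hY.dotProduct_mulVec_nonneg x.ofLp
  have h2 : inner ℂ x (Y.toEuclideanLin x) = star x.ofLp ⬝ᵥ (Y.mulVec x.ofLp) := by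
    rw [EuclideanSpace.inner_eq_star_dotProduct, dotProduct_comm]
    rfl
  rw [h2]
  have := (Complex.le_def.mp this).1
  simp only [Complex.zero_re] at this
  linarith

/-! ### classical part -/

lemma negMulLog_add_le {x y : ℝ} (hx : 0 ≤ x) (hy : 0 ≤ y) :
    Real.negMulLog (x + y) ≤ Real.negMulLog x + Real.negMulLog y := by
  have key : ∀ u v : ℝ, 0 ≤ u → 0 ≤ v → u * Real.log u ≤ u * Real.log (u + v) := by
    intro u v hu hv
    rcases hu.eq_or_lt with rfl | hu
    · simp
    · exact mul_le_mul_of_nonneg_left (Real.log_le_log hu (by linarith)) hu.le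
  have h1 := key x y hx hy
  have h2 := key y x hy hx
  rw [add_comm y x] at h2
  simp only [Real.negMulLog]
  linarith

/-- `u log v - u log u ≤ v - u`. -/
lemma klein {u v : ℝ} (hu : 0 ≤ u) (hv : 0 < v) :
    u * Real.log v + Real.negMulLog u ≤ v - u := by
  rcases hu.eq_or_lt with rfl | hu
  · simpa using hv.le
  · have := Real.log_le_sub_one_of_pos (div_pos hv hu)
    rw [Real.log_div hv.ne' hu.ne'] at this
    have h2 := mul_le_mul_of_nonneg_left this hu.le
    have h3 : u * (v / u - 1) = v - u := by field_simp
    rw [h3] at h2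
    simp only [Real.negMulLog]
    linarith

lemma log_sum {p n ε : ℝ} (hp : 0 ≤ p) (hn : 0 ≤ n) (hε : 0 ≤ ε) (hnε : n ≤ ε) :
    Real.negMulLog p ≤ Real.negMulLog (p + n) + (p + n) * Real.log (1 + ε) := by
  rcases hn.eq_or_lt with rfl | hn'
  · have := Real.log_nonneg (show 1 ≤ 1 + ε by linarith)
    simp only [add_zero]
    have := mul_nonneg hp this
    linarith
  have hε' : 0 < ε := by linarith
  have hc : 0 < p + n := by linarith
  have h1 := klein hp (v := (p + n) / (1 + ε)) (by positivity)
  have h2 := klein hn (v := ε * ((p + n) / (1 + ε))) (by positivity)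
  rw [Real.log_mul hε'.ne' (by positivity)] at h2
  rw [Real.log_div (by positivity) (by positivity)] at h1 h2
  have h3 : (p + n) / (1 + ε) + ε * ((p + n) / (1 + ε)) = p + n := by field_simp
  have h4 : n * Real.log n ≤ n * Real.log ε :=
    mul_le_mul_of_nonneg_left (Real.log_le_log hn' hnε) hn
  simp only [Real.negMulLog] at *
  linarith

lemma sum_negMulLog_le {ι : Type*} [Fintype ι] [Nonempty ι] {m : ι → ℝ} {ε : ℝ}
    (hm : ∀ i, 0 ≤ m i) (hs : ∑ i, m i = ε) :
    ∑ i, Real.negMulLog (m i) ≤ ε * Real.log (Fintype.card ι) + Real.negMulLog ε := by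
  have hd : (0 : ℝ) < Fintype.card ι := by exact_mod_cast Fintype.card_pos
  rcases (Finset.sum_nonneg fun i _ => hm i : 0 ≤ ∑ i, m i).eq_or_lt with h0 | h0
  · have : ∀ i, m i = 0 := fun i =>
      (Finset.sum_eq_zero_iff_of_nonneg fun i _ => hm i).mp h0.symm i (Finset.mem_univ i)
    have hε : ε = 0 := by rw [← hs, ← h0]
    simp [this, hε]
  rw [hs] at h0
  have h1 := Finset.sum_le_sum fun i (_ : i ∈ Finset.univ) =>
    klein (hm i) (v := ε / Fintype.card ι) (by positivity)
  rw [Finset.sum_add_distrib, Finset.sum_sub_distrib, ← Finset.sum_mul, hs,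
    Real.log_div h0.ne' hd.ne'] at h1
  simp only [Finset.sum_const, Finset.card_univ, nsmul_eq_mul] at h1
  rw [mul_div_cancel₀ _ hd.ne'] at h1
  simp only [Real.negMulLog] at *
  linarith

lemma classical {ι : Type*} [Fintype ι] [Nonempty ι] {p q c : ι → ℝ} {ε : ℝ} (hε : 0 ≤ ε)
    (hp : ∀ i, 0 ≤ p i) (hq : ∀ i, 0 ≤ q i) (hpc : ∀ i, p i ≤ c i) (hqc : ∀ i, q i ≤ c i)
    (hp1 : ∑ i, p i = 1) (hq1 : ∑ i, q i = 1) (hc1 : ∑ i, c i ≤ 1 + ε) :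
    ∑ i, Real.negMulLog (p i) - ∑ i, Real.negMulLog (q i)
      ≤ 2 * ε * Real.log (Fintype.card ι) + (1 + ε) * binEnt (ε / (1 + ε)) := by
  wlog hc : ∑ i, c i = 1 + ε generalizing c
  · have hd : (0 : ℝ) < Fintype.card ι := by exact_mod_cast Fintype.card_pos
    set t := (1 + ε - ∑ i, c i) / Fintype.card ι with ht
    have ht0 : 0 ≤ t := div_nonneg (by linarith) hd.le
    have hs : ∑ i, (c i + t) = 1 + ε := by
      rw [Finset.sum_add_distrib]
      simp only [Finset.sum_const, Finset.card_univ, nsmul_eq_mul]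
      rw [ht, mul_div_cancel₀ _ hd.ne']
      ring
    exact this (c := fun i => c i + t) (fun i => by linarith [hpc i]) (fun i => by linarith [hqc i])
      hs.le hs
  have hn : ∀ i, c i - p i ≤ ε := fun i => by
    have : c i - p i ≤ ∑ j, (c j - p j) :=
      Finset.single_le_sum (f := fun j => c j - p j) (fun j _ => by linarith [hpc j])
        (Finset.mem_univ i)
    rw [Finset.sum_sub_distrib, hc, hp1] at this
    linarith
  have h1 : ∑ i, Real.negMulLog (p i)
      ≤ ∑ i, Real.negMulLog (c i) + (1 + ε) * Real.log (1 + ε) := by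
    rw [← hc, Finset.sum_mul, ← Finset.sum_add_distrib, hc]
    refine Finset.sum_le_sum fun i _ => ?_
    have := log_sum (hp i) (n := c i - p i) (by linarith [hpc i]) hε (hn i)
    simpa using this
  have h2 : ∑ i, Real.negMulLog (c i)
      ≤ ∑ i, Real.negMulLog (q i) + ∑ i, Real.negMulLog (c i - q i) := by
    rw [← Finset.sum_add_distrib]
    refine Finset.sum_le_sum fun i _ => ?_
    have := negMulLog_add_le (hq i) (y := c i - q i) (by linarith [hqc i])
    simpa using this
  have h3 := sum_negMulLog_le (m := fun i => c i - q i) (ε := ε) (fun i => by linarith [hqc i])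
    (by rw [Finset.sum_sub_distrib, hc, hq1]; ring)
  have hlog : 0 ≤ ε * Real.log (Fintype.card ι) := mul_nonneg hε
    (Real.log_nonneg (by exact_mod_cast Fintype.card_pos))
  have hb : (1 + ε) * binEnt (ε / (1 + ε)) = (1 + ε) * Real.log (1 + ε) + Real.negMulLog ε := by
    have h1ε : (0 : ℝ) < 1 + ε := by linarith
    have e1 : 1 - ε / (1 + ε) = 1 / (1 + ε) := by field_simp; ring
    unfold binEnt
    rw [e1]
    rcases hε.eq_or_lt with rfl | hε'
    · simp
    simp only [Real.negMulLog]
    rw [Real.log_div hε'.ne' h1ε.ne', Real.log_div one_ne_zero h1ε.ne', Real.log_one]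
    field_simp
    ring
  rw [hb]
  linarith

/-! ### matrices -/

lemma sum_eigenvalues_eq {d : Type*} [Fintype d] [DecidableEq d] {X : Matrix d d ℂ}
    (hX : X.IsHermitian) : ∑ i, hX.eigenvalues i = X.trace.re := by
  rw [hX.trace_eq_sum_eigenvalues]
  simp

lemma ptraceB_add {A B : Type*} [Fintype B] (X Y : Matrix (A × B) (A × B) ℂ) :
    ptraceB (X + Y) = ptraceB X + ptraceB Y := by
  ext a a'
  simp [ptraceB, Finset.sum_add_distrib]

lemma ptraceB_trace {A B : Type*} [Fintype A] [Fintype B] (X : Matrix (A × B) (A × B) ℂ) :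
    (ptraceB X).trace = X.trace := by
  simp [ptraceB, Matrix.trace, Fintype.sum_prod_type]

lemma ptraceB_posSemidef {A B : Type*} [Fintype A] [Fintype B] {X : Matrix (A × B) (A × B) ℂ}
    (hX : X.PosSemidef) : (ptraceB X).PosSemidef := by
  have : ptraceB X = ∑ b, X.submatrix (fun a => (a, b)) (fun a => (a, b)) := by
    ext a a'
    simp [ptraceB, Matrix.sum_apply]
  rw [this]
  exact Matrix.posSemidef_sum _ fun b _ => hX.submatrix _

lemma jordan {d : Type*} [Fintype d] [DecidableEq d] {X : Matrix d d ℂ} (hX : X.IsHermitian) :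
    ∃ P N : Matrix d d ℂ, P.PosSemidef ∧ N.PosSemidef ∧ X + N = P ∧
      P.trace.re + N.trace.re = trNorm X := by
  let U : Matrix d d ℂ := hX.eigenvectorUnitary
  have hU : star U * U = 1 := Unitary.coe_star_mul_self _
  let D : (d → ℝ) → Matrix d d ℂ := fun v =>
    U * Matrix.diagonal (fun i => (v i : ℂ)) * star U
  have hpos : ∀ v : d → ℝ, (∀ i, 0 ≤ v i) → (D v).PosSemidef := by
    intro v hv
    refine Matrix.PosSemidef.mul_mul_conjTranspose_same (Matrix.PosSemidef.diagonal ?_) U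
    intro i
    simpa using hv i
  have htr : ∀ v : d → ℝ, (D v).trace.re = ∑ i, v i := by
    intro v
    simp only [D]
    rw [Matrix.trace_mul_comm, ← mul_assoc, hU, one_mul, Matrix.trace_diagonal]
    simp
  have hXD : X = D hX.eigenvalues := by
    conv_lhs => rw [hX.spectral_theorem]
    rfl
  have hadd : ∀ v w, D v + D w = D (v + w) := by
    intro v w
    simp only [D]
    rw [← add_mul, ← mul_add, Matrix.diagonal_add]
    simp
  refine ⟨D fun i => max (hX.eigenvalues i) 0, D fun i => max (-hX.eigenvalues i) 0,
    hpos _ fun i => le_max_right _ _, hpos _ fun i => le_max_right _ _, ?_, ?_⟩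
  · refine (congrArg (fun M => M + D fun i => max (-hX.eigenvalues i) 0) hXD).trans ?_
    refine (hadd _ _).trans ?_
    congr 1
    ext i
    simp only [Pi.add_apply]
    rcases le_total 0 (hX.eigenvalues i) with h | h
    · rw [max_eq_left h, max_eq_right (by linarith)]; ring
    · rw [max_eq_right h, max_eq_left (by linarith)]; ring
  · rw [htr, htr, trNorm, dif_pos hX, ← Finset.sum_add_distrib]
    refine Finset.sum_congr rfl fun i _ => ?_
    rcases le_total 0 (hX.eigenvalues i) with h | h
    · rw [max_eq_left h, max_eq_right (by linarith), abs_of_nonneg h]; ring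
    · rw [max_eq_right h, max_eq_left (by linarith), abs_of_nonpos h]; ring

/-- Audenaert–Winter continuity bound: if `½‖ρ − σ‖₁ ≤ ε ≤ 1` for density matrices
`ρ, σ` on `H_A ⊗ H_B`, then
`|S(ρ_A) − S(σ_A)| ≤ 2ε·log d_A + (1+ε)·h(ε/(1+ε))`. -/
theorem entropy_continuity
    {A B : Type*} [Fintype A] [DecidableEq A] [Fintype B] [DecidableEq B]
    (ρ σ : Matrix (A × B) (A × B) ℂ)
    (hρ : ρ.PosSemidef) (hρ1 : ρ.trace = 1)
    (hσ : σ.PosSemidef) (hσ1 : σ.trace = 1)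
    (ε : ℝ) (hε0 : 0 ≤ ε) (hε1 : ε ≤ 1)
    (hdist : trNorm (ρ - σ) / 2 ≤ ε) :
    |vN (ptraceB ρ) - vN (ptraceB σ)|
      ≤ 2 * ε * Real.log (Fintype.card A) + (1 + ε) * binEnt (ε / (1 + ε)) := by
  have hA : Nonempty A := by
    by_contra hne
    rw [not_nonempty_iff] at hne
    simp [Matrix.trace] at hρ1
  have hsub : (ρ - σ).IsHermitian := hρ.isHermitian.sub hσ.isHermitian
  obtain ⟨P, N, hP, hN, hPN, htr⟩ := jordan hsub
  have hc : ρ + N = σ + P := by rw [← hPN]; abel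
  have htPN : P.trace.re = N.trace.re := by
    have := congrArg (fun M => (Matrix.trace M).re) hc
    simp only [Matrix.trace_add, hρ1, hσ1, Complex.add_re] at this
    linarith
  have hNε : N.trace.re ≤ ε := by linarith
  have hcA : ptraceB ρ + ptraceB N = ptraceB σ + ptraceB P := by
    rw [← ptraceB_add, ← ptraceB_add, hc]
  have pρ := ptraceB_posSemidef hρ
  have pσ := ptraceB_posSemidef hσ
  have pN := ptraceB_posSemidef hN
  have pP := ptraceB_posSemidef hP
  have hC : (ptraceB ρ + ptraceB N).IsHermitian := (pρ.add pN).isHermitian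
  have hle1 := weyl_matrix pρ.isHermitian pN hC
  have hle2 : ∀ i, pσ.isHermitian.eigenvalues i ≤ hC.eigenvalues i := by
    revert hC
    rw [hcA]
    intro hC _
    exact weyl_matrix pσ.isHermitian pP hC
  have s1 : ∑ i, pρ.isHermitian.eigenvalues i = 1 := by
    rw [sum_eigenvalues_eq, ptraceB_trace, hρ1]; simp
  have s2 : ∑ i, pσ.isHermitian.eigenvalues i = 1 := by
    rw [sum_eigenvalues_eq, ptraceB_trace, hσ1]; simp
  have s3 : ∑ i, hC.eigenvalues i ≤ 1 + ε := by
    rw [sum_eigenvalues_eq, Matrix.trace_add, ptraceB_trace, ptraceB_trace, hρ1]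
    simpa using hNε
  rw [vN, vN, dif_pos pρ.isHermitian, dif_pos pσ.isHermitian, abs_le]
  have b1 := classical hε0 pρ.eigenvalues_nonneg pσ.eigenvalues_nonneg hle1 hle2 s1 s2 s3
  have b2 := classical hε0 pσ.eigenvalues_nonneg pρ.eigenvalues_nonneg hle2 hle1 s2 s1 s3
  constructor <;> linarith
end

section
/- Let H₁ and H₂ be positive semidefinite Hermitian operators on a finite-dimensional Hilbert space with ground (minimum) energies a₁ and a₂ respectively. Suppose for each H_i the gap between its ground-space eigenvalue and the next-highest eigenvalue is larger than Λ > 0, and the angle between the two ground spaces is θ (i.e., cos θ = max{|⟨u,v⟩| : u, v unit vectors in the respective ground spaces}). Then the minimum eigenvalue of H₁ + H₂ is at least a₁ + a₂ + 2Λ sin²(θ/2). -/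
open scoped BigOperators ComplexOrder
open Matrix

/-- The (real) quadratic form `⟨v, H v⟩` of a matrix. -/
noncomputable def quadForm {n : Type*} [Fintype n] (H : Matrix n n ℂ) (v : n → ℂ) : ℝ :=
  (star v ⬝ᵥ H.mulVec v).re

/-- The squared ℓ²-norm `‖v‖² = ∑ᵢ ‖vᵢ‖²`. -/
noncomputable def nsq {n : Type*} [Fintype n] (v : n → ℂ) : ℝ := ∑ i, ‖v i‖ ^ 2

lemma kgl_inner {n : Type*} [Fintype n] (u v : n → ℂ) :
    inner ℂ (WithLp.toLp 2 u : EuclideanSpace ℂ n) (WithLp.toLp 2 v) = star u ⬝ᵥ v := by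
  rw [EuclideanSpace.inner_eq_star_dotProduct, dotProduct_comm]

lemma kgl_nsq {n : Type*} [Fintype n] (v : n → ℂ) :
    nsq v = ‖(WithLp.toLp 2 v : EuclideanSpace ℂ n)‖ ^ 2 := by
  rw [EuclideanSpace.norm_sq_eq]; rfl

lemma kgl_decomp {n : Type*} [Fintype n] (V : Submodule ℂ (n → ℂ)) (v : n → ℂ) :
    ∃ p ∈ V, ∀ w ∈ V, star w ⬝ᵥ (v - p) = 0 := by
  let W : Submodule ℂ (EuclideanSpace ℂ n) :=
    V.comap (WithLp.linearEquiv 2 ℂ (n → ℂ)).toLinearMap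
  obtain ⟨p, hp, q, hq, h⟩ := W.exists_add_mem_mem_orthogonal (WithLp.toLp 2 v)
  refine ⟨WithLp.ofLp p, hp, fun w hw => ?_⟩
  have h1 : inner ℂ (WithLp.toLp 2 w : EuclideanSpace ℂ n) q = 0 :=
    (Submodule.mem_orthogonal W q).1 hq _ hw
  have h2 : v - WithLp.ofLp p = WithLp.ofLp q := by
    have := congrArg WithLp.ofLp h
    simp only [WithLp.ofLp_add] at this
    rw [this]; simp
  rw [h2, ← kgl_inner]
  exact h1

lemma kgl_abstract {E : Type*} [NormedAddCommGroup E] [InnerProductSpace ℂ E]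
    (x p q : E) (c : ℝ) (hc : 0 ≤ c) (hp : inner ℂ p (x - p) = 0) (hq : inner ℂ q (x - q) = 0)
    (h : ‖inner ℂ p q‖ ≤ c * (‖p‖ * ‖q‖)) :
    ‖p‖ ^ 2 + ‖q‖ ^ 2 ≤ (1 + c) * ‖x‖ ^ 2 := by
  have e1 : (inner ℂ p x).re = ‖p‖ ^ 2 := by
    rw [inner_sub_right, sub_eq_zero] at hp
    rw [hp]; exact inner_self_eq_norm_sq (𝕜 := ℂ) p
  have e2 : (inner ℂ q x).re = ‖q‖ ^ 2 := by
    rw [inner_sub_right, sub_eq_zero] at hq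
    rw [hq]; exact inner_self_eq_norm_sq (𝕜 := ℂ) q
  have e3 : ‖p‖ ^ 2 + ‖q‖ ^ 2 ≤ ‖p + q‖ * ‖x‖ := by
    rw [← e1, ← e2, ← Complex.add_re, ← inner_add_left]
    exact re_inner_le_norm (𝕜 := ℂ) (p + q) x
  have e4 : ‖p + q‖ ^ 2 = ‖p‖ ^ 2 + 2 * (inner ℂ p q).re + ‖q‖ ^ 2 := norm_add_sq (𝕜 := ℂ) p q
  have e5 : (inner ℂ p q).re ≤ c * (‖p‖ * ‖q‖) := (Complex.re_le_norm _).trans h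
  have e6 : c * (2 * (‖p‖ * ‖q‖)) ≤ c * (‖p‖ ^ 2 + ‖q‖ ^ 2) :=
    mul_le_mul_of_nonneg_left (by nlinarith [sq_nonneg (‖p‖ - ‖q‖)]) hc
  have e7 : ‖p + q‖ ^ 2 ≤ (1 + c) * (‖p‖ ^ 2 + ‖q‖ ^ 2) := by linarith
  set s := ‖p‖ ^ 2 + ‖q‖ ^ 2 with hs
  have s0 : 0 ≤ s := by positivity
  rcases s0.eq_or_lt with h0 | h0
  · rw [← h0]; positivity
  · have e8 : s ^ 2 ≤ (‖p + q‖ * ‖x‖) ^ 2 := pow_le_pow_left₀ s0 e3 2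
    have e9 : ‖p + q‖ ^ 2 * ‖x‖ ^ 2 ≤ (1 + c) * s * ‖x‖ ^ 2 :=
      mul_le_mul_of_nonneg_right e7 (sq_nonneg _)
    refine le_of_mul_le_mul_left ?_ h0
    nlinarith

lemma kgl_energy {n : Type*} [Fintype n] [DecidableEq n]
    (H : Matrix n n ℂ) (hH : H.IsHermitian) (a Λ : ℝ) (V : Submodule ℂ (n → ℂ))
    (hV : ∀ v ∈ V, H.mulVec v = (a : ℂ) • v)
    (hgap : ∀ v : n → ℂ, (∀ w ∈ V, star w ⬝ᵥ v = 0) → (a + Λ) * nsq v ≤ quadForm H v)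
    (v p : n → ℂ) (hp : p ∈ V) (ho : ∀ w ∈ V, star w ⬝ᵥ (v - p) = 0) :
    (a + Λ) * nsq v - Λ * nsq p ≤ quadForm H v := by
  obtain ⟨q, rfl⟩ : ∃ q, v = p + q := ⟨v - p, by simp⟩
  rw [add_sub_cancel_left] at ho
  have hpq : star p ⬝ᵥ q = 0 := ho p hp
  have hqp : star q ⬝ᵥ p = 0 := by
    rw [← kgl_inner, inner_eq_zero_symm, kgl_inner, hpq]
  have hn : nsq (p + q) = nsq p + nsq q := by
    rw [kgl_nsq, kgl_nsq, kgl_nsq, WithLp.toLp_add, pow_two, pow_two, pow_two]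
    exact norm_add_sq_eq_norm_sq_add_norm_sq_of_inner_eq_zero _ _ (by rw [kgl_inner, hpq])
  have hpp : (star p ⬝ᵥ p).re = nsq p := by
    rw [← kgl_inner, kgl_nsq]; exact inner_self_eq_norm_sq (𝕜 := ℂ) _
  have hx : star p ⬝ᵥ H.mulVec q = 0 := by
    rw [dotProduct_mulVec, ← hH.eq, ← star_mulVec, hV p hp, star_smul, smul_dotProduct, hpq,
      smul_zero]
  have hq' : quadForm H (p + q) = a * nsq p + quadForm H q := by
    unfold quadForm
    rw [mulVec_add, star_add, add_dotProduct, dotProduct_add, dotProduct_add, hx, hV p hp,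
      dotProduct_smul, dotProduct_smul, hqp, ← hpp]
    simp
  have := hgap q ho
  rw [hq', hn]
  linarith

lemma kgl_angle {n : Type*} [Fintype n] (V₁ V₂ : Submodule ℂ (n → ℂ)) (c : ℝ)
    (hcos : ∀ u ∈ V₁, ∀ v ∈ V₂, nsq u = 1 → nsq v = 1 → ‖star u ⬝ᵥ v‖ ≤ c)
    (u v : n → ℂ) (hu : u ∈ V₁) (hv : v ∈ V₂) :
    ‖star u ⬝ᵥ v‖ ≤ c * (‖(WithLp.toLp 2 u : EuclideanSpace ℂ n)‖ *
      ‖(WithLp.toLp 2 v : EuclideanSpace ℂ n)‖) := by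
  set r := ‖(WithLp.toLp 2 u : EuclideanSpace ℂ n)‖ with hr
  set t := ‖(WithLp.toLp 2 v : EuclideanSpace ℂ n)‖ with ht
  have hb : ‖star u ⬝ᵥ v‖ ≤ r * t := by
    rw [← kgl_inner]; exact norm_inner_le_norm _ _
  by_cases r0 : r = 0
  · simpa [r0] using hb
  by_cases t0 : t = 0
  · simpa [t0] using hb
  have rp : 0 < r := lt_of_le_of_ne (norm_nonneg _) (Ne.symm r0)
  have tp : 0 < t := lt_of_le_of_ne (norm_nonneg _) (Ne.symm t0)
  have key := hcos (((r⁻¹ : ℝ) : ℂ) • u) (V₁.smul_mem _ hu) (((t⁻¹ : ℝ) : ℂ) • v)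
    (V₂.smul_mem _ hv)
    (by rw [kgl_nsq, WithLp.toLp_smul, norm_smul, ← hr, Complex.norm_real, Real.norm_eq_abs,
          abs_of_pos (inv_pos.2 rp), inv_mul_cancel₀ r0, one_pow])
    (by rw [kgl_nsq, WithLp.toLp_smul, norm_smul, ← ht, Complex.norm_real, Real.norm_eq_abs,
          abs_of_pos (inv_pos.2 tp), inv_mul_cancel₀ t0, one_pow])
  rw [star_smul, smul_dotProduct, dotProduct_smul, norm_smul, norm_smul, norm_star,
    Complex.norm_real, Complex.norm_real, Real.norm_eq_abs, Real.norm_eq_abs,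
    abs_of_pos (inv_pos.2 rp), abs_of_pos (inv_pos.2 tp)] at key
  have h2 := mul_le_mul_of_nonneg_left key (mul_pos rp tp).le
  have h3 : r * t * (r⁻¹ * (t⁻¹ * ‖star u ⬝ᵥ v‖)) = ‖star u ⬝ᵥ v‖ := by
    field_simp
  linarith

/-- Kitaev's geometric lemma: let `H₁, H₂` be PSD operators with ground energies `a₁, a₂`,
ground spaces `V₁, V₂`, spectral gaps larger than `Λ > 0` above the ground spaces, and angle
`θ` between the ground spaces (`cos θ` bounds the overlap of unit ground vectors). Then the
ground energy of `H₁ + H₂` is at least `a₁ + a₂ + 2Λ sin²(θ/2)`. -/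
theorem kitaev_geometric_lemma {n : Type*} [Fintype n] [DecidableEq n]
    (H₁ H₂ : Matrix n n ℂ) (hpsd₁ : H₁.PosSemidef) (hpsd₂ : H₂.PosSemidef)
    (a₁ a₂ Λ θ : ℝ) (hΛ : 0 < Λ)
    (V₁ V₂ : Submodule ℂ (n → ℂ))
    -- `V₁, V₂` are eigenspaces of `H₁, H₂` with eigenvalues `a₁, a₂`
    (hV₁ : ∀ v ∈ V₁, H₁.mulVec v = (a₁ : ℂ) • v)
    (hV₂ : ∀ v ∈ V₂, H₂.mulVec v = (a₂ : ℂ) • v)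
    -- `a₁, a₂` are the minimum energies
    (hlow₁ : ∀ v : n → ℂ, a₁ * nsq v ≤ quadForm H₁ v)
    (hlow₂ : ∀ v : n → ℂ, a₂ * nsq v ≤ quadForm H₂ v)
    -- the gap above the ground space is larger than `Λ`
    (hgap₁ : ∀ v : n → ℂ, (∀ w ∈ V₁, star w ⬝ᵥ v = 0) → (a₁ + Λ) * nsq v ≤ quadForm H₁ v)
    (hgap₂ : ∀ v : n → ℂ, (∀ w ∈ V₂, star w ⬝ᵥ v = 0) → (a₂ + Λ) * nsq v ≤ quadForm H₂ v)
    -- `θ` is the angle between the two ground spaces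
    (hθ0 : 0 ≤ θ) (hθ1 : θ ≤ Real.pi / 2)
    (hcos : ∀ u ∈ V₁, ∀ v ∈ V₂, nsq u = 1 → nsq v = 1 → ‖star u ⬝ᵥ v‖ ≤ Real.cos θ) :
    ∀ v : n → ℂ,
      (a₁ + a₂ + 2 * Λ * Real.sin (θ / 2) ^ 2) * nsq v ≤ quadForm (H₁ + H₂) v := by
  intro v
  obtain ⟨p, hp, hpo⟩ := kgl_decomp V₁ v
  obtain ⟨q, hq, hqo⟩ := kgl_decomp V₂ v
  have h1 := kgl_energy H₁ hpsd₁.isHermitian a₁ Λ V₁ hV₁ hgap₁ v p hp hpo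
  have h2 := kgl_energy H₂ hpsd₂.isHermitian a₂ Λ V₂ hV₂ hgap₂ v q hq hqo
  have hc : 0 ≤ Real.cos θ := Real.cos_nonneg_of_mem_Icc ⟨by linarith [Real.pi_pos], hθ1⟩
  have h3 := kgl_abstract (WithLp.toLp 2 v : EuclideanSpace ℂ n) (WithLp.toLp 2 p)
    (WithLp.toLp 2 q) (Real.cos θ) hc
    (by rw [← WithLp.toLp_sub, kgl_inner]; exact hpo p hp)
    (by rw [← WithLp.toLp_sub, kgl_inner]; exact hqo q hq)
    (by rw [kgl_inner]; exact kgl_angle V₁ V₂ _ hcos p q hp hq)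
  rw [← kgl_nsq, ← kgl_nsq, ← kgl_nsq] at h3
  have h4 : 2 * Real.sin (θ / 2) ^ 2 = 1 - Real.cos θ := by
    have := Real.cos_sq (θ / 2)
    rw [mul_div_cancel₀ θ (two_ne_zero)] at this
    have := Real.sin_sq_add_cos_sq (θ / 2)
    linarith
  have h5 : quadForm (H₁ + H₂) v = quadForm H₁ v + quadForm H₂ v := by
    unfold quadForm
    rw [add_mulVec, dotProduct_add, Complex.add_re]
  have h6 : 2 * Λ * Real.sin (θ / 2) ^ 2 = Λ * (1 - Real.cos θ) := by rw [← h4]; ring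
  rw [h5, h6]
  have h7 := mul_le_mul_of_nonneg_left h3 hΛ.le
  linarith
end
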